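/- arXiv:1411.1652 — 6 statements merged into one kernel-verified Lean document; each statement's English description precedes it below -/
import Mathlib

section
/- (Main Implicit Bound) Let G be a connected simple graph on n ≥ 2 vertices with maximum degree Δ, Laplacian L and Moore–Penrose pseudoinverse B of L, and set f = max_i B_{ii}, o = max_{i≠j} |B_{ij}|. Suppose x : V → ℕ and d : V → ℤ satisfy L x = d (viewing x, d as integer vectors), x_k = 0 for some vertex k, |d_k| ≤ Δ − 1, and ∑_i |d_i| ≤ 2N for a real number N with 2N ≥ Δ − 1. Then s := ∑_i x_i satisfies s ≤ n·( f·(Δ − 1) + o·(2N − Δ + 1) ). -/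
open Matrix

/-!
For the Laplacian `L`, the matrix `B L` is the orthogonal projection onto the complement of the
constants, so `B (L x)` is `x` minus its average, and the entry at `k` turns `∑ i, (x i - x k)` into
`-n ∑ j, B k j * (L x) j`. Bounding the diagonal coefficient by `f` and the others by `o` gives
`f |(L x) k| + o (M - |(L x) k|)` whenever `∑ j, |(L x) j| ≤ M`. This is nondecreasing in
`|(L x) k|` because `o ≤ f`: the matrix `B = Bᵀ L B` is positive semidefinite, so its entries are
dominated by its diagonal.
-/

/-- `b` is the Moore–Penrose inverse of `a`. The four Penrose equations make sense in any semigroup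
with involution; for square real matrices the involution is the transpose. -/
structure IsMoorePenroseInverse {S : Type*} [Mul S] [Star S] (a b : S) : Prop where
  mul_mul_left : a * b * a = a
  mul_mul_right : b * a * b = b
  isSelfAdjoint_mul_left : IsSelfAdjoint (a * b)
  isSelfAdjoint_mul_right : IsSelfAdjoint (b * a)

namespace IsMoorePenroseInverse

section Semigroup

variable {S : Type*} [Semigroup S] [StarMul S] {a b c : S}

protected lemma star (h : IsMoorePenroseInverse a b) : IsMoorePenroseInverse (star a) (star b) where
  mul_mul_left := by rw [← star_mul, ← star_mul, ← mul_assoc, h.mul_mul_left]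
  mul_mul_right := by rw [← star_mul, ← star_mul, ← mul_assoc, h.mul_mul_right]
  isSelfAdjoint_mul_left := by
    rw [← star_mul, IsSelfAdjoint.star_iff]
    exact h.isSelfAdjoint_mul_right
  isSelfAdjoint_mul_right := by
    rw [← star_mul, IsSelfAdjoint.star_iff]
    exact h.isSelfAdjoint_mul_left

lemma unique (hb : IsMoorePenroseInverse a b) (hc : IsMoorePenroseInverse a c) : b = c := by
  have mul_left_eq : a * b = a * c := by
    calc a * b = a * c * (a * b) := by rw [← mul_assoc, hc.mul_mul_left]
      _ = star (a * b * (a * c)) := by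
        rw [star_mul, hb.isSelfAdjoint_mul_left.star_eq, hc.isSelfAdjoint_mul_left.star_eq]
      _ = a * c := by
        rw [← mul_assoc, hb.mul_mul_left, hc.isSelfAdjoint_mul_left.star_eq]
  have mul_right_eq : b * a = c * a := by
    calc b * a = b * a * (c * a) := by rw [mul_assoc, ← mul_assoc a, hc.mul_mul_left]
      _ = star (c * a * (b * a)) := by
        rw [star_mul, hb.isSelfAdjoint_mul_right.star_eq, hc.isSelfAdjoint_mul_right.star_eq]
      _ = c * a := by
        rw [mul_assoc, ← mul_assoc a, hb.mul_mul_left, hc.isSelfAdjoint_mul_right.star_eq]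
  calc b = b * a * b := hb.mul_mul_right.symm
    _ = c * a * c := by rw [mul_right_eq, mul_assoc, mul_left_eq, mul_assoc]
    _ = c := hc.mul_mul_right

protected lemma isSelfAdjoint (h : IsMoorePenroseInverse a b) (ha : IsSelfAdjoint a) :
    IsSelfAdjoint b :=
  unique (ha.star_eq ▸ h.star) h

end Semigroup

section Matrix

variable {ι R : Type*} [Fintype ι]

protected lemma posSemidef [Ring R] [PartialOrder R] [StarRing R] {A B : Matrix ι ι R}
    (h : IsMoorePenroseInverse A B) (hA : A.PosSemidef) : B.PosSemidef := by
  have hB : Bᴴ = B := h.isSelfAdjoint hA.isHermitian.isSelfAdjoint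
  simpa only [hB, h.mul_mul_right] using hA.conjTranspose_mul_mul_same B

variable [CommRing R] [StarRing R] {L B : Matrix ι ι R}

lemma sum_mulVec_mulVec_eq_zero (h : IsMoorePenroseInverse L B) (hL : L *ᵥ 1 = 0) (x : ι → R) :
    ∑ i, (B *ᵥ (L *ᵥ x)) i = 0 := by
  have hBL : (B * L)ᴴ = B * L := h.isSelfAdjoint_mul_right
  have one_vecMul : 1 ᵥ* (B * L) = 0 := by
    rw [← hBL, ← star_one (ι → R), ← star_mulVec, ← mulVec_mulVec, hL, mulVec_zero, star_zero]
  rw [← one_dotProduct, mulVec_mulVec, dotProduct_mulVec, one_vecMul, zero_dotProduct]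

lemma sum_sub_eq_neg_card_mul (h : IsMoorePenroseInverse L B)
    (hL : ∀ y, L *ᵥ y = 0 ↔ ∀ i j, y i = y j) (x : ι → R) (k : ι) :
    ∑ i, (x i - x k) = -(Fintype.card ι * (B *ᵥ (L *ᵥ x)) k) := by
  set z := B *ᵥ (L *ᵥ x) with hz
  have hker : L *ᵥ (x - z) = 0 := by
    rw [mulVec_sub, hz, mulVec_mulVec, mulVec_mulVec, h.mul_mul_left, sub_self]
  have hconst (i : ι) : x i - x k = z i - z k := by
    have hik : x i - z i = x k - z k := (hL _).1 hker i k
    linear_combination hik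
  have hsum : ∑ i, z i = 0 := h.sum_mulVec_mulVec_eq_zero ((hL 1).2 fun _ _ ↦ rfl) x
  simp only [hconst, Finset.sum_sub_distrib, hsum, Finset.sum_const, Finset.card_univ,
    nsmul_eq_mul, zero_sub]

end Matrix

end IsMoorePenroseInverse

section PosSemidef

variable {ι : Type*} {B : Matrix ι ι ℝ}

lemma sq_apply_le_mul_diag_of_posSemidef (hB : B.PosSemidef) (i j : ι) :
    B i j ^ 2 ≤ B i i * B j j := by
  have hji : B j i = B i j := by simpa using hB.isHermitian.apply i j
  have hdet := (hB.submatrix ![i, j]).det_nonneg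
  simp only [det_fin_two, submatrix_apply, cons_val_zero, cons_val_one, hji] at hdet
  linarith

lemma abs_apply_le_of_posSemidef_of_diag_le (hB : B.PosSemidef) {f : ℝ}
    (hf : ∀ i, B i i ≤ f) (i j : ι) : |B i j| ≤ f := by
  have hf₀ : 0 ≤ f := hB.diag_nonneg.trans (hf i)
  refine abs_le_of_sq_le_sq ?_ hf₀
  calc B i j ^ 2 ≤ B i i * B j j := sq_apply_le_mul_diag_of_posSemidef hB i j
    _ ≤ f * f := mul_le_mul (hf i) (hf j) hB.diag_nonneg hf₀
    _ = f ^ 2 := (sq f).symm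

end PosSemidef

lemma abs_dotProduct_le_of_abs_le {ι R : Type*} [Fintype ι]
    [CommRing R] [LinearOrder R] [IsStrictOrderedRing R] {b d : ι → R} {k : ι} {f o D M : R}
    (ho : 0 ≤ o) (hof : o ≤ f) (hbk : |b k| ≤ f) (hb : ∀ j, k ≠ j → |b j| ≤ o)
    (hdk : |d k| ≤ D) (hd : ∑ j, |d j| ≤ M) : |b ⬝ᵥ d| ≤ f * D + o * (M - D) := by
  classical
  have hterm (j : ι) : |b j * d j| ≤ o * |d j| + if k = j then (f - o) * |d k| else 0 := by
    rw [abs_mul]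
    split_ifs with hkj
    · subst hkj
      linarith [mul_le_mul_of_nonneg_right hbk (abs_nonneg (d k))]
    · rw [add_zero]
      exact mul_le_mul_of_nonneg_right (hb j hkj) (abs_nonneg _)
  calc |b ⬝ᵥ d| ≤ ∑ j, |b j * d j| := Finset.abs_sum_le_sum_abs _ _
    _ ≤ ∑ j, (o * |d j| + if k = j then (f - o) * |d k| else 0) :=
      Finset.sum_le_sum fun j _ ↦ hterm j
    _ = o * ∑ j, |d j| + (f - o) * |d k| := by
      rw [Finset.sum_add_distrib, ← Finset.mul_sum, Finset.sum_ite_eq,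
        if_pos (Finset.mem_univ k)]
    _ ≤ o * M + (f - o) * D := by
      gcongr
    _ = f * D + o * (M - D) := by ring

/-- The hypotheses on `L` hold for the Laplacian of any connected graph with positive edge weights;
`D` and `M` play the roles of `Δ - 1` and `2N`. -/
theorem chipFiring_main_implicit_bound_general {V : Type*} [Fintype V] {L B : Matrix V V ℝ}
    (hL : L.PosSemidef) (hker : ∀ y, L *ᵥ y = 0 ↔ ∀ i j, y i = y j)
    (hB : IsMoorePenroseInverse L B) {f o : ℝ} (hf : IsGreatest (Set.range fun i ↦ B i i) f)
    (ho : IsGreatest {r : ℝ | ∃ i j, i ≠ j ∧ |B i j| = r} o) (x : V → ℝ) (k : V) {D M : ℝ}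
    (hD : |(L *ᵥ x) k| ≤ D) (hM : ∑ i, |(L *ᵥ x) i| ≤ M) :
    |∑ i, (x i - x k)| ≤ Fintype.card V * (f * D + o * (M - D)) := by
  have abs_le_f : ∀ i j, |B i j| ≤ f :=
    abs_apply_le_of_posSemidef_of_diag_le (hB.posSemidef hL) fun i ↦ hf.2 ⟨i, rfl⟩
  obtain ⟨i, j, -, hij⟩ := ho.1
  rw [hB.sum_sub_eq_neg_card_mul hker, abs_neg, abs_mul, Nat.abs_cast]
  gcongr
  exact abs_dotProduct_le_of_abs_le (hij ▸ abs_nonneg _) (hij ▸ abs_le_f i j) (abs_le_f k k)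
    (fun j hkj ↦ ho.2 ⟨k, j, hkj, rfl⟩) hD hM

section Laplacian

variable {V : Type*} [Fintype V] [DecidableEq V] (G : SimpleGraph V) [DecidableRel G.Adj]

lemma lapMatrix_mulVec_comp {R S : Type*} [NonAssocRing R] [NonAssocRing S] (φ : R →+* S)
    (x : V → R) : G.lapMatrix S *ᵥ (φ ∘ x) = φ ∘ (G.lapMatrix R *ᵥ x) := by
  ext i
  simp [SimpleGraph.lapMatrix_mulVec_apply]

variable {G}

lemma lapMatrix_mulVec_eq_zero_iff_of_preconnected (hG : G.Preconnected) (y : V → ℝ) :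
    G.lapMatrix ℝ *ᵥ y = 0 ↔ ∀ i j, y i = y j := by
  simp only [SimpleGraph.lapMatrix_mulVec_eq_zero_iff_forall_reachable, hG _ _, true_imp_iff]

end Laplacian

/-- Main Implicit Bound: the duration `s = ∑ i, x i` of a terminating chip-firing
game with `N` chips on a connected graph `G` on `n ≥ 2` vertices with maximum degree `Δ`
satisfies `s ≤ n (f (Δ - 1) + o (2N - Δ + 1))`, where `f` is the largest diagonal entry
and `o` the largest absolute value of an off-diagonal entry of the Moore–Penrose
pseudoinverse `B` of the Laplacian of `G`. -/
theorem chipFiring_main_implicit_bound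
    {n : ℕ} (hn : 2 ≤ n)
    (G : SimpleGraph (Fin n)) [DecidableRel G.Adj]
    (hG : G.Connected)
    (B : Matrix (Fin n) (Fin n) ℝ)
    (hB1 : G.lapMatrix ℝ * B * G.lapMatrix ℝ = G.lapMatrix ℝ)
    (hB2 : B * G.lapMatrix ℝ * B = B)
    (hB3 : (G.lapMatrix ℝ * B)ᵀ = G.lapMatrix ℝ * B)
    (hB4 : (B * G.lapMatrix ℝ)ᵀ = B * G.lapMatrix ℝ)
    (f o : ℝ)
    (hf : IsGreatest (Set.range fun i => B i i) f)
    (ho : IsGreatest {r : ℝ | ∃ i j : Fin n, i ≠ j ∧ |B i j| = r} o)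
    (x : Fin n → ℕ) (d : Fin n → ℤ)
    (hLx : G.lapMatrix ℤ *ᵥ (fun i => (x i : ℤ)) = d)
    (k : Fin n) (hk : x k = 0)
    (hdk : |d k| ≤ (G.maxDegree : ℤ) - 1)
    (N : ℝ) (hN : (∑ i, |(d i : ℝ)|) ≤ 2 * N)
    (hNΔ : (G.maxDegree : ℝ) - 1 ≤ 2 * N) :
    ((∑ i, x i : ℕ) : ℝ) ≤
      n * (f * ((G.maxDegree : ℝ) - 1) + o * (2 * N - (G.maxDegree : ℝ) + 1)) := by
  have hLx_real (i : Fin n) : (G.lapMatrix ℝ *ᵥ fun j ↦ (x j : ℝ)) i = d i := by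
    simpa [hLx, Function.comp_def] using
      congrFun (lapMatrix_mulVec_comp G (Int.castRingHom ℝ) fun j ↦ (x j : ℤ)) i
  have hdk_real : |(d k : ℝ)| ≤ G.maxDegree - 1 := mod_cast hdk
  have hbound := chipFiring_main_implicit_bound_general (SimpleGraph.posSemidef_lapMatrix ℝ G)
    (lapMatrix_mulVec_eq_zero_iff_of_preconnected hG.preconnected) ⟨hB1, hB2, hB3, hB4⟩ hf ho
    (fun i ↦ (x i : ℝ)) k (by simpa only [hLx_real] using hdk_real)
    (by simpa only [hLx_real] using hN)
  simpa [hk, ← sub_add] using (le_abs_self _).trans hbound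
end

section
/- (Björner–Lovász–Shor bound) Let G be a connected simple graph on n ≥ 2 vertices with Laplacian L and algebraic connectivity λ₂ (the smallest nonzero eigenvalue of L). Suppose x : V → ℕ and d : V → ℤ satisfy L x = d, x_k = 0 for some vertex k, and ∑_i |d_i| ≤ 2N for a real number N ≥ 0. Then s := ∑_i x_i satisfies s ≤ 2·n·N/λ₂. -/
open Matrix

/-!
Write `x = m + y` with `m` the mean of `x` and `∑ i, y i = 0`. The Laplacian `L` of a connected
graph kills exactly the constants, so `L y = L x` and `y` is orthogonal to `ker L`. Hence only
eigenvectors with eigenvalue at least `λ₂` contribute to `y`, and `λ₂ ‖y‖₂ ≤ ‖L x‖₂ ≤ ‖L x‖₁`.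
At a vertex `k` that never fires, `y k = -m`, so that `λ₂ m ≤ ‖L x‖₁`.
-/

open scoped BigOperators InnerProductSpace

lemma norm_toLp_le_sum_norm {ι : Type*} [Fintype ι] {β : ι → Type*}
    [∀ i, SeminormedAddCommGroup (β i)] (p : ENNReal) [Fact (1 ≤ p)] (x : ∀ i, β i) :
    ‖WithLp.toLp p x‖ ≤ ∑ i, ‖x i‖ := by
  classical
  calc ‖WithLp.toLp p x‖ = ‖∑ i, PiLp.single p i (x i)‖ := by
        simp only [← PiLp.toLp_single, ← WithLp.toLp_sum, Finset.univ_sum_single]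
    _ ≤ ∑ i, ‖PiLp.single p i (x i)‖ := norm_sum_le _ _
    _ = ∑ i, ‖x i‖ := by simp only [PiLp.norm_single]

lemma mem_spectrum_iff_exists_mulVec_eq_smul {ι K : Type*} [Fintype ι] [DecidableEq ι] [Field K]
    {A : Matrix ι ι K} {μ : K} : μ ∈ spectrum K A ↔ ∃ v : ι → K, v ≠ 0 ∧ A *ᵥ v = μ • v := by
  rw [← spectrum_toLin', ← Module.End.hasEigenvalue_iff_mem_spectrum]
  constructor
  · intro h
    obtain ⟨v, hv⟩ := h.exists_hasEigenvector
    exact ⟨v, hv.2, hv.apply_eq_smul⟩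
  · rintro ⟨v, hv0, hv⟩
    exact Module.End.hasEigenvalue_of_hasEigenvector
      (Module.End.hasEigenvector_iff.2 ⟨Module.End.mem_eigenspace_iff.2 hv, hv0⟩)

lemma mul_norm_le_norm_apply_of_mem_orthogonal_ker {𝕜 E : Type*} [RCLike 𝕜]
    [NormedAddCommGroup E] [InnerProductSpace 𝕜 E] [FiniteDimensional 𝕜 E] {T : E →ₗ[𝕜] E}
    (hT : T.IsSymmetric) {c : ℝ} (hc : ∀ μ ∈ spectrum 𝕜 T \ {0}, c ≤ ‖μ‖) {y : E}
    (hy : y ∈ T.kerᗮ) : c * ‖y‖ ≤ ‖T y‖ := by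
  obtain hc0 | hc0 := le_total c 0
  · exact (mul_nonpos_of_nonpos_of_nonneg hc0 (norm_nonneg y)).trans (norm_nonneg _)
  let b := hT.eigenvectorBasis rfl
  have hTb (j) : T (b j) = (hT.eigenvalues rfl j : 𝕜) • b j := hT.apply_eigenvectorBasis rfl j
  have norm_inner_apply (j) : ‖⟪b j, T y⟫_𝕜‖ = ‖(hT.eigenvalues rfl j : 𝕜)‖ * ‖⟪b j, y⟫_𝕜‖ := by
    rw [← hT, hTb, inner_smul_left, norm_mul, RCLike.norm_conj]
  have coordinate_le (j) : c * ‖⟪b j, y⟫_𝕜‖ ≤ ‖⟪b j, T y⟫_𝕜‖ := by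
    by_cases hj : (hT.eigenvalues rfl j : 𝕜) = 0
    · have hb : b j ∈ T.ker := by rw [LinearMap.mem_ker, hTb, hj, zero_smul]
      simp [Submodule.inner_right_of_mem_orthogonal hb hy]
    · rw [norm_inner_apply]
      gcongr
      exact hc _ ⟨(hT.hasEigenvalue_eigenvalues rfl j).mem_spectrum, hj⟩
  refine le_of_sq_le_sq ?_ (norm_nonneg _)
  calc (c * ‖y‖) ^ 2 = ∑ j, (c * ‖⟪b j, y⟫_𝕜‖) ^ 2 := by
        simp only [mul_pow, ← Finset.mul_sum, b.sum_sq_norm_inner_right]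
    _ ≤ ∑ j, ‖⟪b j, T y⟫_𝕜‖ ^ 2 := by gcongr with j; exact coordinate_le j
    _ = ‖T y‖ ^ 2 := b.sum_sq_norm_inner_right _

section Laplacian

variable {V : Type*} [Fintype V] [DecidableEq V] {G : SimpleGraph V} [DecidableRel G.Adj]

lemma map_lapMatrix_mulVec {R S : Type*} [NonAssocRing R] [NonAssocRing S] (f : R →+* S)
    (v : V → R) (i : V) : f ((G.lapMatrix R *ᵥ v) i) = (G.lapMatrix S *ᵥ (f ∘ v)) i := by
  simp [SimpleGraph.lapMatrix_mulVec_apply]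

lemma nonneg_of_mem_spectrum_lapMatrix {μ : ℝ} (hμ : μ ∈ spectrum ℝ (G.lapMatrix ℝ)) : 0 ≤ μ :=
  (posSemidef_iff_isHermitian_and_spectrum_nonneg.1 (G.posSemidef_lapMatrix ℝ)).2 hμ

lemma lapMatrix_mulVec_balance (x : V → ℝ) :
    G.lapMatrix ℝ *ᵥ Fintype.balance x = G.lapMatrix ℝ *ᵥ x := by
  have hconst : G.lapMatrix ℝ *ᵥ Function.const V (𝔼 i, x i) = 0 :=
    G.lapMatrix_mulVec_eq_zero_iff_forall_adj.2 fun _ _ _ => rfl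
  rw [Fintype.balance, mulVec_sub, hconst, sub_zero]

lemma toLp_mem_orthogonal_ker_lapMatrix (hG : G.Connected) {y : V → ℝ} (hy : ∑ i, y i = 0) :
    WithLp.toLp 2 y ∈ (toEuclideanLin (G.lapMatrix ℝ)).kerᗮ := by
  intro z hz
  have hz : G.lapMatrix ℝ *ᵥ z.ofLp = 0 := congrArg WithLp.ofLp (LinearMap.mem_ker.1 hz)
  rw [G.lapMatrix_mulVec_eq_zero_iff_forall_reachable] at hz
  obtain ⟨k⟩ := hG.nonempty
  have hconst (i) : z.ofLp i = z.ofLp k := hz i k (hG.preconnected i k)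
  simp [PiLp.inner_apply, hconst, ← Finset.sum_mul, hy]

lemma mul_norm_le_norm_lapMatrix_mulVec (hG : G.Connected) {c : ℝ}
    (hc : c ∈ lowerBounds (spectrum ℝ (G.lapMatrix ℝ) \ {0})) {y : V → ℝ} (hy : ∑ i, y i = 0) :
    c * ‖WithLp.toLp 2 y‖ ≤ ‖WithLp.toLp 2 (G.lapMatrix ℝ *ᵥ y)‖ :=
  mul_norm_le_norm_apply_of_mem_orthogonal_ker
    (isSymmetric_toEuclideanLin_iff.2 (G.isHermitian_lapMatrix ℝ))
    (fun μ hμ => (hc (by rwa [spectrum_toLpLin] at hμ)).trans (le_abs_self μ))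
    (toLp_mem_orthogonal_ker_lapMatrix hG hy)

lemma mul_abs_sub_expect_le_norm_lapMatrix_mulVec (hG : G.Connected) {c : ℝ} (hc0 : 0 ≤ c)
    (hc : c ∈ lowerBounds (spectrum ℝ (G.lapMatrix ℝ) \ {0})) (x : V → ℝ) (k : V) :
    c * |x k - 𝔼 i, x i| ≤ ‖WithLp.toLp 2 (G.lapMatrix ℝ *ᵥ x)‖ :=
  calc c * |x k - 𝔼 i, x i| ≤ c * ‖WithLp.toLp 2 (Fintype.balance x)‖ := by
        gcongr
        exact PiLp.norm_apply_le (WithLp.toLp 2 (Fintype.balance x)) k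
    _ ≤ ‖WithLp.toLp 2 (G.lapMatrix ℝ *ᵥ Fintype.balance x)‖ :=
        mul_norm_le_norm_lapMatrix_mulVec hG hc (Fintype.sum_balance x)
    _ = ‖WithLp.toLp 2 (G.lapMatrix ℝ *ᵥ x)‖ := by rw [lapMatrix_mulVec_balance]

theorem chipFiring_bjorner_lovasz_shor_bound_general (hG : G.Connected) {lam2 : ℝ}
    (hlam2 : IsLeast (spectrum ℝ (G.lapMatrix ℝ) \ {0}) lam2) {x : V → ℝ} {k : V} (hk : x k = 0)
    {N : ℝ} (hN : ∑ i, |(G.lapMatrix ℝ *ᵥ x) i| ≤ 2 * N) :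
    ∑ i, x i ≤ 2 * Fintype.card V * N / lam2 := by
  have hpos : 0 < lam2 :=
    (nonneg_of_mem_spectrum_lapMatrix hlam2.1.1).lt_of_ne' hlam2.1.2
  have mean_le : lam2 * 𝔼 i, x i ≤ 2 * N :=
    calc lam2 * 𝔼 i, x i ≤ lam2 * |x k - 𝔼 i, x i| := by
          gcongr
          simpa only [hk, zero_sub, abs_neg] using le_abs_self _
      _ ≤ ‖WithLp.toLp 2 (G.lapMatrix ℝ *ᵥ x)‖ :=
          mul_abs_sub_expect_le_norm_lapMatrix_mulVec hG hpos.le hlam2.2 x k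
      _ ≤ ∑ i, |(G.lapMatrix ℝ *ᵥ x) i| := norm_toLp_le_sum_norm 2 _
      _ ≤ 2 * N := hN
  rw [le_div_iff₀ hpos]
  calc (∑ i, x i) * lam2 = Fintype.card V * (lam2 * 𝔼 i, x i) := by
        rw [← Fintype.card_mul_expect]; ring
    _ ≤ Fintype.card V * (2 * N) := by gcongr
    _ = 2 * Fintype.card V * N := by ring

end Laplacian

/-- Björner–Lovász–Shor bound: the duration `s = ∑ i, x i` of a terminating
chip-firing game with `N` chips on a connected graph `G` on `n ≥ 2` vertices satisfies
`s ≤ 2 n N / λ₂`, where `λ₂` is the algebraic connectivity of `G` (the smallest nonzero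
eigenvalue of the Laplacian). -/
theorem chipFiring_bjorner_lovasz_shor_bound
    {n : ℕ} (hn : 2 ≤ n)
    (G : SimpleGraph (Fin n)) [DecidableRel G.Adj]
    (hG : G.Connected)
    (lam2 : ℝ) (hl2pos : 0 < lam2)
    (hl2eig : ∃ v : Fin n → ℝ, v ≠ 0 ∧ G.lapMatrix ℝ *ᵥ v = lam2 • v)
    (hl2min : ∀ μ : ℝ, μ ≠ 0 →
      (∃ v : Fin n → ℝ, v ≠ 0 ∧ G.lapMatrix ℝ *ᵥ v = μ • v) → lam2 ≤ μ)
    (x : Fin n → ℕ) (d : Fin n → ℤ)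
    (hLx : G.lapMatrix ℤ *ᵥ (fun i => (x i : ℤ)) = d)
    (k : Fin n) (hk : x k = 0)
    (N : ℝ) (hN0 : 0 ≤ N) (hN : (∑ i, |(d i : ℝ)|) ≤ 2 * N) :
    ((∑ i, x i : ℕ) : ℝ) ≤ 2 * n * N / lam2 := by
  have hlam2 : IsLeast (spectrum ℝ (G.lapMatrix ℝ) \ {0}) lam2 :=
    ⟨⟨mem_spectrum_iff_exists_mulVec_eq_smul.2 hl2eig, hl2pos.ne'⟩,
      fun μ hμ => hl2min μ hμ.2 (mem_spectrum_iff_exists_mulVec_eq_smul.1 hμ.1)⟩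
  have hd (i) : (G.lapMatrix ℝ *ᵥ fun j => (x j : ℝ)) i = d i := by
    simpa [← hLx, Function.comp_def] using
      (map_lapMatrix_mulVec (Int.castRingHom ℝ) (fun j => (x j : ℤ)) i).symm
  simpa using chipFiring_bjorner_lovasz_shor_bound_general hG hlam2 (x := fun i => (x i : ℝ))
    (k := k) (by simp [hk]) (by simpa only [hd] using hN)
end

section
/- Let G be a connected simple graph on n ≥ 1 vertices with Laplacian L, let J be the n × n all-ones matrix, and let c be a nonzero real number. Then the matrix L + cJ is invertible, and the Moore–Penrose pseudoinverse B of L satisfies B = (L + cJ)^{-1} − (1/(c·n²))·J. -/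
open Matrix

/-!
Let `E` be the orthogonal projection onto the constant vectors. Since the graph is connected, the
kernel of the symmetric matrix `L` consists of the constant vectors, so `L E = E L = 0` and the
projection `1 - L B` onto that kernel is `E`; moreover `E B = 0` because `B = L Bᴴ B`. Hence
`(L + a E) (B + a⁻¹ E) = L B + E = 1` for `a ≠ 0`, and `c J = a E` with `a = c n`.
-/

/-- `b` is the Moore–Penrose inverse of `a` in a semigroup with involution. For square matrices the
involution is the conjugate transpose, hence the transpose over `ℝ`. -/
structure IsMoorePenroseInverse_s7 {R : Type*} [Mul R] [Star R] (a b : R) : Prop where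
  self_mul_inverse_mul_self : a * b * a = a
  inverse_mul_self_mul_inverse : b * a * b = b
  isSelfAdjoint_self_mul_inverse : IsSelfAdjoint (a * b)
  isSelfAdjoint_inverse_mul_self : IsSelfAdjoint (b * a)

namespace IsMoorePenroseInverse_s7

theorem mul_inverse_eq_zero_of_mul_star_eq_zero {R : Type*} [SemigroupWithZero R] [StarMul R]
    {a b e : R} (h : IsMoorePenroseInverse_s7 a b) (hea : e * star a = 0) : e * b = 0 := by
  have hb : b = star a * star b * b := by
    rw [← star_mul, h.isSelfAdjoint_inverse_mul_self.star_eq, h.inverse_mul_self_mul_inverse]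
  rw [hb, ← mul_assoc, ← mul_assoc, hea, zero_mul, zero_mul]

theorem self_mul_inverse_add_eq_one {R : Type*} [Ring R] [StarMul R] {a b e : R}
    (h : IsMoorePenroseInverse_s7 a b) (hea : e * a = 0)
    (he : ∀ q, star a * q = 0 → e * q = q) : a * b + e = 1 := by
  have hker : star a * (1 - a * b) = 0 := by
    rw [mul_sub, mul_one, ← h.isSelfAdjoint_self_mul_inverse.star_eq, ← star_mul,
      h.self_mul_inverse_mul_self, sub_self]
  have hproj : e = 1 - a * b := by
    simpa only [mul_sub, mul_one, ← mul_assoc, hea, zero_mul, sub_zero] using he _ hker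
  rw [hproj, add_sub_cancel]

end IsMoorePenroseInverse_s7

theorem add_smul_mul_add_inv_smul_eq_one {K R : Type*} [Semifield K] [Semiring R] [Algebra K R]
    {a b e : R} (he : IsIdempotentElem e) (hae : a * e = 0) (heb : e * b = 0)
    (hab : a * b + e = 1) {c : K} (hc : c ≠ 0) : (a + c • e) * (b + c⁻¹ • e) = 1 := by
  simp only [add_mul, mul_add, smul_mul_assoc, mul_smul_comm, hae, heb, he.eq, smul_zero,
    inv_smul_smul₀ hc, add_zero, zero_add, hab]

/-- The matrix `J / n` of size `n`, which replaces every entry of a vector by the mean of its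
entries: the orthogonal projection onto the constant vectors.
Where `n = 0` in `K`, it is the zero matrix. -/
def averagingMatrix (V K : Type*) [Fintype V] [DivisionRing K] : Matrix V V K :=
  of fun _ _ => (Fintype.card V : K)⁻¹

section AveragingMatrix

variable {V m K : Type*} [Fintype V]

theorem isSelfAdjoint_averagingMatrix [DivisionRing K] [StarRing K] :
    IsSelfAdjoint (averagingMatrix V K) := by
  ext i j
  simp [averagingMatrix]

theorem averagingMatrix_mul_eq_self [DivisionRing K] [CharZero K] {Q : Matrix V m K}
    (hQ : ∀ i i' j, Q i j = Q i' j) : averagingMatrix V K * Q = Q := by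
  ext i j
  have : Nonempty V := ⟨i⟩
  simp [averagingMatrix, mul_apply, hQ _ i j]

theorem isIdempotentElem_averagingMatrix [DivisionRing K] [CharZero K] :
    IsIdempotentElem (averagingMatrix V K) :=
  averagingMatrix_mul_eq_self fun _ _ _ => rfl

theorem card_smul_averagingMatrix [DivisionRing K] [CharZero K] :
    (Fintype.card V : K) • averagingMatrix V K = of 1 := by
  ext i j
  have : Nonempty V := ⟨i⟩
  simp [averagingMatrix]

end AveragingMatrix

section Laplacian

variable {V m K : Type*} [Fintype V] [DecidableEq V] {G : SimpleGraph V} [DecidableRel G.Adj]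

theorem lapMatrix_mul_averagingMatrix [DivisionRing K] :
    G.lapMatrix K * averagingMatrix V K = 0 := by
  ext i j
  change (G.lapMatrix K *ᵥ fun _ => (Fintype.card V : K)⁻¹) i = 0
  simp [G.lapMatrix_mulVec_apply]

theorem averagingMatrix_mul_lapMatrix [DivisionRing K] [StarRing K] :
    averagingMatrix V K * G.lapMatrix K = 0 := by
  rw [← isSelfAdjoint_averagingMatrix.star_eq, ← (G.isHermitian_lapMatrix K).isSelfAdjoint.star_eq,
    ← star_mul, lapMatrix_mul_averagingMatrix, star_zero]

-- The `ℚ`-linear functionals on `K` separate points, which reduces the claim to real vectors.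
theorem apply_eq_of_lapMatrix_mulVec_eq_zero [DivisionRing K] [CharZero K] (hG : G.Preconnected)
    {x : V → K} (hx : G.lapMatrix K *ᵥ x = 0) (i j : V) : x i = x j := by
  rw [← sub_eq_zero, ← Module.forall_dual_apply_eq_zero_iff ℚ]
  intro f
  have hfx : G.lapMatrix ℝ *ᵥ (fun v => (f (x v) : ℝ)) = 0 := by
    ext v
    have hv := congrArg f (congrFun hx v)
    rw [G.lapMatrix_mulVec_apply, ← nsmul_eq_mul, map_sub, map_nsmul, map_sum, Pi.zero_apply,
      map_zero, nsmul_eq_mul] at hv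
    rw [G.lapMatrix_mulVec_apply, Pi.zero_apply]
    exact_mod_cast hv
  rw [map_sub, sub_eq_zero]
  exact_mod_cast G.lapMatrix_mulVec_eq_zero_iff_forall_reachable.mp hfx i j (hG i j)

theorem averagingMatrix_mul_eq_self_of_lapMatrix_mul_eq_zero [DivisionRing K] [CharZero K]
    (hG : G.Preconnected) {Q : Matrix V m K} (hQ : G.lapMatrix K * Q = 0) :
    averagingMatrix V K * Q = Q :=
  averagingMatrix_mul_eq_self fun i i' j =>
    apply_eq_of_lapMatrix_mulVec_eq_zero hG (x := Q.col j)
      (funext fun k => congrFun (congrFun hQ k) j) i i'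

theorem lapMatrix_add_smul_averagingMatrix_mul_eq_one [Field K] [CharZero K] [StarRing K]
    (hG : G.Preconnected) {B : Matrix V V K} (hB : IsMoorePenroseInverse_s7 (G.lapMatrix K) B)
    {a : K} (ha : a ≠ 0) :
    (G.lapMatrix K + a • averagingMatrix V K) * (B + a⁻¹ • averagingMatrix V K) = 1 := by
  have hL : star (G.lapMatrix K) = G.lapMatrix K := G.isHermitian_lapMatrix K
  have hEB : averagingMatrix V K * B = 0 :=
    hB.mul_inverse_eq_zero_of_mul_star_eq_zero (by rw [hL, averagingMatrix_mul_lapMatrix])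
  have hLB : G.lapMatrix K * B + averagingMatrix V K = 1 :=
    hB.self_mul_inverse_add_eq_one averagingMatrix_mul_lapMatrix fun Q hQ =>
      averagingMatrix_mul_eq_self_of_lapMatrix_mul_eq_zero hG (hL ▸ hQ)
  exact add_smul_mul_add_inv_smul_eq_one isIdempotentElem_averagingMatrix
    lapMatrix_mul_averagingMatrix hEB hLB ha

theorem lapMatrix_pinv_eq_inv_add_smul_allOnes_general [Field K] [CharZero K] [StarRing K]
    (hG : G.Connected) {B : Matrix V V K} (hB : IsMoorePenroseInverse_s7 (G.lapMatrix K) B)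
    {c : K} (hc : c ≠ 0) :
    IsUnit (G.lapMatrix K + c • of 1) ∧
    B = (G.lapMatrix K + c • of 1)⁻¹ - (1 / (c * (Fintype.card V : K) ^ 2)) • of 1 := by
  have := hG.nonempty
  have hV : (Fintype.card V : K) ≠ 0 := Nat.cast_ne_zero.mpr Fintype.card_ne_zero
  have hcoeff : 1 / (c * (Fintype.card V : K) ^ 2) * Fintype.card V = (c * Fintype.card V)⁻¹ := by
    field_simp
  have hinv : (G.lapMatrix K + c • of 1) *
      (B + (1 / (c * (Fintype.card V : K) ^ 2)) • of 1) = 1 := by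
    rw [← card_smul_averagingMatrix, smul_smul, smul_smul, hcoeff]
    exact lapMatrix_add_smul_averagingMatrix_mul_eq_one hG.preconnected hB (mul_ne_zero hc hV)
  exact ⟨.of_mul_eq_one _ hinv, by rw [inv_eq_right_inv hinv, add_sub_cancel_right]⟩

end Laplacian

/-- For a connected graph on `n ≥ 1` vertices with Laplacian `L`, all-ones matrix `J`
and any `c ≠ 0`, the matrix `L + cJ` is invertible and the Moore–Penrose pseudoinverse
`B` of `L` satisfies `B = (L + cJ)⁻¹ - (1/(c n²)) J`. -/
theorem lapMatrix_pinv_eq_inv_add_smul_allOnes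
    {n : ℕ} (hn : 1 ≤ n)
    (G : SimpleGraph (Fin n)) [DecidableRel G.Adj]
    (hG : G.Connected)
    (B : Matrix (Fin n) (Fin n) ℝ)
    (hB1 : G.lapMatrix ℝ * B * G.lapMatrix ℝ = G.lapMatrix ℝ)
    (hB2 : B * G.lapMatrix ℝ * B = B)
    (hB3 : (G.lapMatrix ℝ * B)ᵀ = G.lapMatrix ℝ * B)
    (hB4 : (B * G.lapMatrix ℝ)ᵀ = B * G.lapMatrix ℝ)
    (c : ℝ) (hc : c ≠ 0)
    (J : Matrix (Fin n) (Fin n) ℝ) (hJ : ∀ i j, J i j = 1) :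
    IsUnit (G.lapMatrix ℝ + c • J) ∧
    B = (G.lapMatrix ℝ + c • J)⁻¹ - (1 / (c * (n : ℝ) ^ 2)) • J := by
  obtain rfl : J = of 1 := Matrix.ext hJ
  simpa only [Fintype.card_fin] using
    lapMatrix_pinv_eq_inv_add_smul_allOnes_general hG ⟨hB1, hB2, hB3, hB4⟩ hc
end

section
/- Let G be a connected strongly regular graph with parameters (n, k, a, c) which is neither the complete graph K_n nor the pentagon C₅. Then a − c ≤ (k − 5)/2. -/
/-!
Let `θ, τ` be the eigenvalues of `G` other than `k`: the roots of `X² - s X - m`, where `s = a - c`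
and `m = k - c`. If `f` is the multiplicity of `θ`, then `trace A = 0` reads
`k + f θ + (n - 1 - f) τ = 0`, so the discriminant `s² + 4 m` is a perfect square unless the
"conference" identity `2 k + (n - 1) s = 0` holds.

If the bound fails, then `s + 1 < m < 2 s + 4`, the first inequality because `a + 1 < k` and the
second because `c ≥ 1`. Hence `(s + 2)² < s² + 4 m < (s + 4)²`, and `s² + 4 m` has the parity of
`s`, so it is not a square. The conference identity then forces `s < 0`, whence `s = -1`, `m = 1`,
and the parameters are `(5, 2, 0, 1)`. A graph with these parameters contains a pentagon, and
regularity leaves no room for further edges.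
-/

open Matrix SimpleGraph

section Trace

variable {ι K : Type*} [Fintype ι] [Field K]

theorem trace_eq_rank_of_isIdempotentElem {E : Matrix ι ι K} (hE : IsIdempotentElem E) :
    E.trace = E.rank := by
  classical
  have hE' : IsIdempotentElem (toLin' E) := by
    rw [IsIdempotentElem, Module.End.mul_eq_comp, ← toLin'_mul, hE]
  rw [← trace_toLin'_eq]
  exact ((LinearMap.isProj_range_iff_isIdempotentElem _).2 hE').trace

theorem exists_trace_eq_of_sub_mul_sub_eq_zero [DecidableEq ι] {M : Matrix ι ι K} {θ τ : K}
    (hθτ : θ ≠ τ) (hM : (M - θ • 1) * (M - τ • 1) = 0) :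
    ∃ f : ℕ, M.trace = f * θ + (Fintype.card ι - f) * τ := by
  have hd : θ - τ ≠ 0 := sub_ne_zero.2 hθτ
  set N := M - τ • 1 with hN
  have hNN : N * N = (θ - τ) • N := by
    have hsplit : N = (M - θ • 1) + (θ - τ) • 1 := by rw [hN, sub_smul]; abel
    calc N * N = (M - θ • 1 + (θ - τ) • 1) * N := by rw [← hsplit]
      _ = (θ - τ) • N := by rw [add_mul, hM, zero_add, smul_mul_assoc, one_mul]
  have hE : IsIdempotentElem ((θ - τ)⁻¹ • N) := by
    rw [IsIdempotentElem, smul_mul_smul_comm, hNN, smul_smul, mul_assoc, inv_mul_cancel₀ hd,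
      mul_one]
  have htrace := trace_eq_rank_of_isIdempotentElem hE
  rw [trace_smul, smul_eq_mul, inv_mul_eq_iff_eq_mul₀ hd, hN, trace_sub, trace_smul, trace_one,
    smul_eq_mul] at htrace
  exact ⟨_, by linear_combination htrace⟩

end Trace

section AdjMatrix

variable {V : Type*} [Fintype V] {G : SimpleGraph V} [DecidableRel G.Adj] {n k a c : ℕ}

theorem adjMatrix_mul_of_one {R : Type*} [NonAssocSemiring R] (h : G.IsRegularOfDegree k) :
    G.adjMatrix R * of 1 = (k : R) • of 1 := by
  ext v w
  simp [h.degree_eq v]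

theorem of_one_mul_adjMatrix {R : Type*} [NonAssocSemiring R] (h : G.IsRegularOfDegree k) :
    of 1 * G.adjMatrix R = (k : R) • of 1 := by
  ext v w
  simp [h.degree_eq w]

theorem adjMatrix_mul_self_of_isSRGWith [DecidableEq V] {R : Type*} [Ring R]
    (h : G.IsSRGWith n k a c) :
    G.adjMatrix R * G.adjMatrix R =
      ((a : R) - c) • G.adjMatrix R + ((k : R) - c) • 1 + (c : R) • of 1 := by
  classical
  have hcompl : Gᶜ.adjMatrix R = of 1 - 1 - G.adjMatrix R := by
    rw [← compl_adjMatrix_eq_adjMatrix_compl,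
      ← one_add_adjMatrix_add_compl_adjMatrix_eq_of_one R G]
    abel
  rw [← pow_two, h.matrix_eq, hcompl]
  simp only [← Nat.cast_smul_eq_nsmul R, sub_smul, smul_sub]
  abel

-- `IsSRGWith.param_eq` in a form free of truncated subtraction.
theorem card_mul_eq_of_isSRGWith {R : Type*} [CommRing R] [Nonempty V] (h : G.IsSRGWith n k a c) :
    (n : R) * c = k ^ 2 - (a - c) * k - (k - c) := by
  classical
  obtain ⟨v⟩ := ‹Nonempty V›
  have hmul := congrArg (· * of (1 : V → V → R)) (adjMatrix_mul_self_of_isSRGWith (R := R) h)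
  simp only [mul_assoc, add_mul, smul_mul_assoc, mul_smul_comm, one_mul,
    adjMatrix_mul_of_one h.regular] at hmul
  have hentry := congrFun₂ hmul v v
  simp only [smul_of, Matrix.smul_apply, of_apply, Pi.smul_apply, Pi.one_apply, smul_eq_mul,
    mul_one, of_add_of, Matrix.add_apply, Pi.add_apply, mul_apply, Finset.sum_const,
    Finset.card_univ, h.card, nsmul_eq_mul] at hentry
  linear_combination -hentry

theorem exists_multiplicity_of_isSRGWith {K : Type*} [Field K] [CharZero K] [Nonempty V]
    (h : G.IsSRGWith n k a c) {θ τ : K} (hθτ : θ ≠ τ) (hsum : θ + τ = a - c)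
    (hprod : θ * τ = c - k) :
    ∃ f : ℕ, k + f * θ + (n - 1 - f) * τ = 0 := by
  classical
  have hn : (n : K) ≠ 0 := by simp [← h.card]
  set J : Matrix V V K := of 1
  have hJJ : J * J = (n : K) • J := by
    ext
    simp [J, mul_apply, h.card]
  -- Subtracting `g J` moves the eigenvalue `k` of the constant vectors to `τ`.
  obtain ⟨g, hgn⟩ : ∃ g : K, g * n = k - τ := ⟨(k - τ) / n, div_mul_cancel₀ _ hn⟩
  have hcoeff : c + g * (θ - k) = 0 := by
    refine (mul_eq_zero_iff_left hn).1 ?_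
    linear_combination card_mul_eq_of_isSRGWith (R := K) h + (θ - k) * hgn + k * hsum - hprod
  have hquad : (G.adjMatrix K - g • J - θ • 1) * (G.adjMatrix K - g • J - τ • 1) = 0 := by
    simp only [mul_sub, sub_mul, smul_mul_assoc, mul_smul_comm, mul_one, one_mul, hJJ,
      adjMatrix_mul_self_of_isSRGWith h, J, adjMatrix_mul_of_one h.regular,
      of_one_mul_adjMatrix h.regular]
    match_scalars
    · linear_combination -hsum
    · linear_combination hprod
    · linear_combination hcoeff + g * hgn
  obtain ⟨f, hf⟩ := exists_trace_eq_of_sub_mul_sub_eq_zero hθτ hquad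
  have htrace : (G.adjMatrix K - g • J).trace = τ - k := by
    rw [trace_sub, trace_smul, trace_adjMatrix]
    simp [J, Matrix.trace, h.card, hgn]
  refine ⟨f, ?_⟩
  rw [htrace, h.card] at hf
  linear_combination -hf

end AdjMatrix

section Parameters

variable {V : Type*} {G : SimpleGraph V}

theorem exists_adj_adj_not_adj_ne_of_connected (hG : G.Connected) (htop : G ≠ ⊤) :
    ∃ u v w, G.Adj u v ∧ G.Adj v w ∧ ¬G.Adj u w ∧ u ≠ w := by
  obtain ⟨u, v, huv, hnadj⟩ := ne_top_iff_exists_not_adj.1 htop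
  obtain ⟨p, hp⟩ := hG.exists_walk_length_eq_dist u v
  exact p.exists_adj_adj_not_adj_ne hp (hG.one_lt_dist_of_ne_of_not_adj huv hnadj)

variable [Fintype V] [DecidableRel G.Adj] {n k a c : ℕ}

theorem card_commonNeighbors_add_two_le_degree {u v w : V} (huv : G.Adj u v) (hvw : G.Adj v w)
    (huw : ¬G.Adj u w) (hne : u ≠ w) : Fintype.card (G.commonNeighbors v u) + 2 ≤ G.degree v := by
  classical
  have hsub : (G.commonNeighbors v u).toFinset ⊆ G.neighborFinset v \ {u, w} := fun x hx ↦ by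
    simp only [Set.mem_toFinset, mem_commonNeighbors] at hx
    aesop
  have hpair : {u, w} ⊆ G.neighborFinset v := by
    simp [Finset.insert_subset_iff, huv.symm, hvw]
  have hcard := Finset.card_le_card hsub
  have := Finset.card_sdiff_add_card_eq_card hpair
  rw [Finset.card_pair hne, card_neighborFinset_eq_degree] at this
  rw [Set.toFinset_card] at hcard
  lia

theorem add_two_le_degree_of_isSRGWith (h : G.IsSRGWith n k a c) (hG : G.Connected)
    (htop : G ≠ ⊤) : a + 2 ≤ k := by
  obtain ⟨u, v, w, huv, hvw, huw, hne⟩ := exists_adj_adj_not_adj_ne_of_connected hG htop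
  rw [← h.of_adj v u huv.symm, ← h.regular.degree_eq v]
  exact card_commonNeighbors_add_two_le_degree huv hvw huw hne

theorem pos_of_isSRGWith (h : G.IsSRGWith n k a c) (hG : G.Connected) (htop : G ≠ ⊤) :
    0 < c := by
  obtain ⟨u, v, w, huv, hvw, huw, hne⟩ := exists_adj_adj_not_adj_ne_of_connected hG htop
  rw [← h.of_not_adj hne huw, Fintype.card_pos_iff]
  exact ⟨v, huv, hvw.symm⟩

theorem le_degree_of_isSRGWith (h : G.IsSRGWith n k a c) (htop : G ≠ ⊤) : c ≤ k := by
  obtain ⟨u, v, huv, hnadj⟩ := ne_top_iff_exists_not_adj.1 htop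
  rw [← h.of_not_adj huv hnadj, ← h.regular.degree_eq u]
  exact G.card_commonNeighbors_le_degree_left u v

theorem isSquare_discr_of_isSRGWith (h : G.IsSRGWith n k a c) (htop : G ≠ ⊤)
    (hconf : 2 * (k : ℤ) + (n - 1) * (a - c) ≠ 0) :
    IsSquare (((a : ℤ) - c) ^ 2 + 4 * (k - c)) := by
  obtain ⟨v, -⟩ := ne_top_iff_exists_not_adj.1 htop
  have : Nonempty V := ⟨v⟩
  have hck : (c : ℤ) ≤ k := mod_cast le_degree_of_isSRGWith h htop
  set D : ℤ := ((a : ℤ) - c) ^ 2 + 4 * (k - c) with hD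
  have hD0 : 0 ≤ D := by nlinarith
  by_contra hsq
  have hirr : Irrational √(D : ℝ) := (irrational_sqrt_intCast_iff_of_nonneg hD0).2 hsq
  have hDsq : √(D : ℝ) ^ 2 = ((a : ℝ) - c) ^ 2 + 4 * (k - c) := by
    rw [Real.sq_sqrt (mod_cast hD0), hD]
    push_cast
    rfl
  obtain ⟨f, hf⟩ := exists_multiplicity_of_isSRGWith h
    (θ := ((a : ℝ) - c + √(D : ℝ)) / 2) (τ := ((a : ℝ) - c - √(D : ℝ)) / 2)
    (fun heq ↦ hirr.ne_zero (by linarith)) (by ring) (by linear_combination -hDsq / 4)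
  have hmul : ((n - 1 - 2 * f : ℤ) : ℝ) * √(D : ℝ) =
      (2 * (k : ℤ) + (n - 1) * (a - c) : ℤ) := by
    push_cast
    linear_combination -2 * hf
  have hdiff : (n - 1 - 2 * f : ℤ) ≠ 0 := by
    rintro hzero
    rw [hzero, Int.cast_zero, zero_mul] at hmul
    exact hconf (mod_cast hmul.symm)
  exact (hirr.intCast_mul hdiff).ne_int _ hmul

end Parameters

theorem not_isSquare_sq_add_four_mul {s m : ℤ} (hlow : s + 1 < m) (hupp : m < 2 * s + 4) :
    ¬IsSquare (s ^ 2 + 4 * m) := by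
  rw [isSquare_iff_exists_sq]
  rintro ⟨r, hr⟩
  have hlt : s + 2 < |r| := lt_of_pow_lt_pow_left₀ 2 (abs_nonneg r) (by rw [sq_abs]; linarith)
  have hgt : |r| < s + 4 := lt_of_pow_lt_pow_left₀ 2 (by lia) (by rw [sq_abs]; linarith)
  have hr' : |r| = s + 3 := by lia
  have : 4 * m = 6 * s + 9 := by rw [← sq_abs r, hr'] at hr; linarith
  lia

section Pentagon

theorem copy_adj_iff_of_degree_le {α β : Type*} {A : SimpleGraph α} {B : SimpleGraph β}
    (f : Copy A B) {x y : α} [Fintype (A.neighborSet x)] [Fintype (B.neighborSet (f x))]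
    (hdeg : B.degree (f x) ≤ A.degree x) : B.Adj (f x) (f y) ↔ A.Adj x y := by
  refine ⟨fun hadj ↦ ?_, fun hadj ↦ f.toHom.map_adj hadj⟩
  have hbij : Function.Bijective (f.mapNeighborSet x) :=
    (Fintype.bijective_iff_injective_and_card _).2 ⟨(f.mapNeighborSet x).injective,
      le_antisymm (Fintype.card_le_of_embedding (f.mapNeighborSet x))
        (by simpa only [card_neighborSet_eq_degree])⟩
  obtain ⟨⟨z, hz⟩, hfz⟩ := hbij.surjective ⟨f y, hadj⟩
  obtain rfl : z = y := f.injective (congrArg Subtype.val hfz)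
  exact hz

theorem nonempty_iso_of_isContained_of_isRegularOfDegree {α β : Type*} [Fintype α] [Fintype β]
    {A : SimpleGraph α} {B : SimpleGraph β} [DecidableRel A.Adj] [DecidableRel B.Adj] {d : ℕ}
    (hA : A.IsRegularOfDegree d) (hB : B.IsRegularOfDegree d)
    (hcard : Fintype.card α = Fintype.card β) (hAB : A ⊑ B) : Nonempty (A ≃g B) := by
  obtain ⟨f⟩ := hAB
  have hbij : Function.Bijective f :=
    (Fintype.bijective_iff_injective_and_card _).2 ⟨f.injective, hcard⟩
  exact ⟨⟨.ofBijective f hbij,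
    copy_adj_iff_of_degree_le f (by rw [hA.degree_eq, hB.degree_eq])⟩⟩

variable {V : Type*} [Fintype V] {G : SimpleGraph V} [DecidableRel G.Adj] {n k : ℕ}

theorem cycleGraph_five_isContained_of_isSRGWith [Nonempty V] (h : G.IsSRGWith n k 0 1)
    (hk : 2 ≤ k) : cycleGraph 5 ⊑ G := by
  have htriangle {u v w : V} (huv : G.Adj u v) (hvw : G.Adj v w) : ¬G.Adj u w := fun huw ↦
    (Fintype.card_eq_zero_iff.1 (h.of_adj u v huv)).elim ⟨w, huw, hvw⟩
  have hexists (u v : V) : ∃ w, G.Adj u w ∧ w ≠ v := by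
    have hcard : 1 < (G.neighborFinset u).card := by
      rw [card_neighborFinset_eq_degree, h.regular.degree_eq u]
      exact hk
    simpa using Finset.exists_mem_ne hcard v
  have hcommon {u v : V} (hne : u ≠ v) (huv : ¬G.Adj u v) : ∃! w, G.Adj u w ∧ G.Adj v w := by
    obtain ⟨⟨w, hw⟩, hunique⟩ := Fintype.card_eq_one_iff.1 (h.of_not_adj hne huv)
    exact ⟨w, hw, fun x hx ↦ congrArg Subtype.val (hunique ⟨x, hx⟩)⟩
  obtain ⟨v⟩ := ‹Nonempty V›
  obtain ⟨x, hvx, -⟩ := hexists v v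
  obtain ⟨y, hvy, hyx⟩ := hexists v x
  obtain ⟨z, hxz, hzv⟩ := hexists x v
  have hxy : ¬G.Adj x y := htriangle hvx.symm hvy
  have hvz : ¬G.Adj v z := htriangle hvx hxz
  have hzy_ne : z ≠ y := fun hzy ↦ hxy (hzy ▸ hxz)
  have hzy : ¬G.Adj z y := fun hzy ↦
    hzv ((hcommon hyx.symm hxy).unique ⟨hxz, hzy.symm⟩ ⟨hvx.symm, hvy.symm⟩)
  obtain ⟨w, ⟨hzw, hyw⟩, -⟩ := hcommon hzy_ne hzy
  have hwv : w ≠ v := fun hwv ↦ hvz (hwv ▸ hzw).symm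
  have hwx : w ≠ x := fun hwx ↦ hxy (hwx ▸ hyw).symm
  refine (cycleGraph_isContained_iff (by norm_num)).2
    ⟨v, .cons hvx (.cons hxz (.cons hzw (.cons hyw.symm (.cons hvy.symm .nil)))), ?_, rfl⟩
  simp only [Walk.cons_isCycle_iff, Walk.cons_isPath_iff, Walk.isPath_iff_nil, Walk.nil_nil,
    Walk.support_nil, List.mem_cons, List.not_mem_nil, or_false, true_and, Walk.support_cons,
    not_or, Walk.edges_cons, Walk.edges_nil, Sym2.eq, Sym2.rel_iff', Prod.mk.injEq,
    Prod.swap_prod_mk, and_true, not_and]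
  grind [hvx.ne, hxz.ne, hzw.ne, hyw.ne, hvy.ne]

theorem nonempty_iso_cycleGraph_five_of_isSRGWith (h : G.IsSRGWith 5 2 0 1) :
    Nonempty (G ≃g cycleGraph 5) := by
  have : Nonempty V := Fintype.card_pos_iff.1 (by rw [h.card]; norm_num)
  obtain ⟨e⟩ := nonempty_iso_of_isContained_of_isRegularOfDegree
    (fun _ ↦ cycleGraph_degree_three_le) h.regular (by simp [h.card])
    (cycleGraph_five_isContained_of_isSRGWith h le_rfl)
  exact ⟨e.symm⟩

end Pentagon

/-- For a connected strongly regular graph with parameters `(n, k, a, c)` which is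
neither complete nor the pentagon `C₅`, one has `a - c ≤ (k - 5)/2`, i.e.
`2(a - c) ≤ k - 5` as integers. -/
theorem srg_param_diff_le_half_degree_sub_five
    {V : Type*} [Fintype V] [DecidableEq V]
    (G : SimpleGraph V) [DecidableRel G.Adj]
    {n k a c : ℕ}
    (hsrg : G.IsSRGWith n k a c)
    (hG : G.Connected)
    (hnc : G ≠ ⊤)
    (hC5 : ¬ Nonempty (G ≃g SimpleGraph.cycleGraph 5)) :
    2 * ((a : ℤ) - c) ≤ (k : ℤ) - 5 := by
  by_contra! hlt
  have hc := pos_of_isSRGWith hsrg hG hnc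
  have hak := add_two_le_degree_of_isSRGWith hsrg hG hnc
  have hnsq : ¬IsSquare (((a : ℤ) - c) ^ 2 + 4 * (k - c)) :=
    not_isSquare_sq_add_four_mul (by lia) (by lia)
  have hconf : 2 * (k : ℤ) + (n - 1) * (a - c) = 0 := by
    by_contra hne
    exact hnsq (isSquare_discr_of_isSRGWith hsrg hnc hne)
  have hn : 0 < n := hsrg.card ▸ Fintype.card_pos_iff.2 hG.nonempty
  have hac : a < c := by
    by_contra! hca
    have : 0 ≤ ((n : ℤ) - 1) * (a - c) := mul_nonneg (by lia) (by lia)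
    lia
  obtain ⟨rfl, rfl, rfl⟩ : k = 2 ∧ a = 0 ∧ c = 1 := by lia
  obtain rfl : n = 5 := by lia
  exact hC5 (nonempty_iso_cycleGraph_five_of_isSRGWith hsrg)
end

section
/- Let G be a connected strongly regular graph with parameters (n, k, a, c), not complete (so c ≥ 1), with Laplacian L and Moore–Penrose pseudoinverse B of L. Then every diagonal entry of B is given by B_{ii} = (k·(n − 2) − (n − 1)·(a − c))/(n²·c). -/
/-! Let `J` be the all-ones matrix and `s = 2 k - a + c`. Strong regularity says that the
Laplacian satisfies `L² = s L - c n I + c J`. Both `L` and its pseudoinverse `B` annihilate `J` on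
either side, because `B` has the same kernel as `Lᵀ = L`. Multiplying the quadratic relation on the
right by `B L` therefore gives `c n B L = c n I - c J`, and multiplying it on the left by `B` gives
`c n B = s B L - L`. Together they express `B` through `I`, `J` and `L`, whose diagonals are
constant. -/

open Matrix

section MoorePenrose

variable {m n p R : Type*} [Fintype m] [Fintype n]

/-- `B` is a Moore–Penrose inverse of `A`. The symmetry conditions use the plain transpose, as is
appropriate for real matrices; over `ℂ` the usual notion has conjugate transposes instead. -/
structure IsMoorePenroseInverse_s15 [NonUnitalNonAssocSemiring R] (A : Matrix m n R)
    (B : Matrix n m R) : Prop where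
  self_mul_inv_mul_self : A * B * A = A
  inv_mul_self_mul_inv : B * A * B = B
  isSymm_self_mul_inv : (A * B).IsSymm
  isSymm_inv_mul_self : (B * A).IsSymm

namespace IsMoorePenroseInverse_s15

section CommSemiring

variable [CommSemiring R] {A : Matrix m n R} {B : Matrix n m R}

theorem inv_mul_eq_zero_of_transpose_mul_eq_zero (h : IsMoorePenroseInverse_s15 A B)
    {M : Matrix m p R} (hM : Aᵀ * M = 0) : B * M = 0 :=
  calc
    B * M = B * (A * B)ᵀ * M := by
      rw [h.isSymm_self_mul_inv.eq, ← Matrix.mul_assoc, h.inv_mul_self_mul_inv]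
    _ = B * Bᵀ * (Aᵀ * M) := by simp only [transpose_mul, Matrix.mul_assoc]
    _ = 0 := by rw [hM, Matrix.mul_zero]

theorem mul_inv_eq_zero_of_mul_transpose_eq_zero (h : IsMoorePenroseInverse_s15 A B)
    {M : Matrix p n R} (hM : M * Aᵀ = 0) : M * B = 0 :=
  calc
    M * B = M * (B * A)ᵀ * B := by
      rw [h.isSymm_inv_mul_self.eq, Matrix.mul_assoc, h.inv_mul_self_mul_inv]
    _ = M * Aᵀ * (Bᵀ * B) := by simp only [transpose_mul, Matrix.mul_assoc]
    _ = 0 := by rw [hM, Matrix.zero_mul]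

theorem inv_mul_self_mul_transpose (h : IsMoorePenroseInverse_s15 A B) : B * A * Aᵀ = Aᵀ := by
  rw [← h.isSymm_inv_mul_self.eq, ← transpose_mul, ← Matrix.mul_assoc, h.self_mul_inv_mul_self]

end CommSemiring

section Quadratic

variable [DecidableEq n] [CommRing R] {A B J : Matrix n n R} {s c d : R}

theorem smul_inv_mul_self_of_sq_eq (h : IsMoorePenroseInverse_s15 A B) (hA : A.IsSymm)
    (hJA : J * A = 0) (hsq : A ^ 2 = s • A - d • (1 : Matrix n n R) + c • J) :
    d • (B * A) = d • (1 : Matrix n n R) - c • J := by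
  have hJB : J * B = 0 := h.mul_inv_eq_zero_of_mul_transpose_eq_zero (by rwa [hA.eq])
  have hABA : A * (B * A) = A := by rw [← mul_assoc, h.self_mul_inv_mul_self]
  have hJBA : J * (B * A) = 0 := by rw [← mul_assoc, hJB, zero_mul]
  have hsq_mul : s • A - d • (1 : Matrix n n R) + c • J = s • A - d • (B * A) :=
    calc
      _ = A ^ 2 * (B * A) := by rw [← hsq, sq, mul_assoc, hABA]
      _ = s • A - d • (B * A) := by
        rw [hsq, add_mul, sub_mul, smul_mul_assoc, smul_mul_assoc, smul_mul_assoc, hABA, hJBA,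
          one_mul, smul_zero, add_zero]
  linear_combination (norm := module) hsq_mul

theorem smul_inv_of_sq_eq (h : IsMoorePenroseInverse_s15 A B) (hA : A.IsSymm) (hAJ : A * J = 0)
    (hsq : A ^ 2 = s • A - d • (1 : Matrix n n R) + c • J) :
    d • B = s • (B * A) - A := by
  have hBJ : B * J = 0 := h.inv_mul_eq_zero_of_transpose_mul_eq_zero (by rwa [hA.eq])
  have hBAA : B * A * A = A := by simpa only [hA.eq] using h.inv_mul_self_mul_transpose
  have hmul_sq : A = s • (B * A) - d • B :=
    calc
      A = B * A ^ 2 := by rw [sq, ← mul_assoc, hBAA]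
      _ = s • (B * A) - d • B := by
        rw [hsq, mul_add, mul_sub, mul_smul_comm, mul_smul_comm, mul_smul_comm, hBJ, mul_one,
          smul_zero, add_zero]
  linear_combination (norm := module) hmul_sq

theorem smul_smul_inv_of_sq_eq (h : IsMoorePenroseInverse_s15 A B) (hA : A.IsSymm)
    (hAJ : A * J = 0) (hJA : J * A = 0)
    (hsq : A ^ 2 = s • A - d • (1 : Matrix n n R) + c • J) :
    d • d • B = s • (d • (1 : Matrix n n R) - c • J) - d • A := by
  rw [h.smul_inv_of_sq_eq hA hAJ hsq, smul_sub, smul_comm d s,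
    h.smul_inv_mul_self_of_sq_eq hA hJA hsq]

end Quadratic

end IsMoorePenroseInverse_s15

end MoorePenrose

section Laplacian

variable {V ι R : Type*} [Fintype V] [DecidableEq V] (G : SimpleGraph V) [DecidableRel G.Adj]

theorem lapMatrix_mul_of_one [NonAssocRing R] : G.lapMatrix R * (of 1 : Matrix V ι R) = 0 :=
  Matrix.ext fun i _ ↦ congrFun G.lapMatrix_mulVec_const_eq_zero i

theorem of_one_mul_lapMatrix [CommRing R] : (of 1 : Matrix ι V R) * G.lapMatrix R = 0 := by
  rw [← transpose_inj, transpose_mul, (G.isSymm_lapMatrix (R := R)).eq]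
  exact lapMatrix_mul_of_one G

theorem lapMatrix_eq_of_isRegularOfDegree [Ring R] {G : SimpleGraph V} [DecidableRel G.Adj] {k : ℕ}
    (h : G.IsRegularOfDegree k) :
    G.lapMatrix R = (k : R) • (1 : Matrix V V R) - G.adjMatrix R := by
  rw [SimpleGraph.lapMatrix, SimpleGraph.degMatrix, smul_one_eq_diagonal]
  simp only [h.degree_eq]

end Laplacian

section StronglyRegular

variable {V R : Type*} [Fintype V] {G : SimpleGraph V} [DecidableRel G.Adj] {n k a c : ℕ}

theorem mu_ne_zero_of_isSRGWith (h : G.IsSRGWith n k a c) (hG : G.Connected) (hnc : G ≠ ⊤) :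
    c ≠ 0 := by
  obtain ⟨x, y, hxy, hadj⟩ := SimpleGraph.ne_top_iff_exists_not_adj.1 hnc
  obtain ⟨p, hp⟩ := hG.exists_walk_length_eq_dist x y
  obtain ⟨u, v, w, huv, hvw, huw, hne⟩ :=
    p.exists_adj_adj_not_adj_ne hp (hG.one_lt_dist_of_ne_of_not_adj hxy hadj)
  rw [← h.of_not_adj hne huw]
  exact (Fintype.card_pos_iff.2 ⟨v, huv, hvw.symm⟩).ne'

theorem adjMatrix_sq_of_isSRGWith [DecidableEq V] [Semiring R] (h : G.IsSRGWith n k a c) :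
    G.adjMatrix R ^ 2 + c • (1 + G.adjMatrix R) =
      k • (1 : Matrix V V R) + a • G.adjMatrix R + c • of 1 := by
  classical
  rw [h.matrix_eq, ← G.one_add_adjMatrix_add_compl_adjMatrix_eq_of_one R,
    G.compl_adjMatrix_eq_adjMatrix_compl R, smul_add c (1 + _)]
  abel

/-- Counts the walks of length two from a fixed vertex in two ways. Unlike in
`SimpleGraph.IsSRGWith.param_eq`, no subtraction occurs, so that the identity can be cast. -/
theorem mul_self_add_eq_of_isSRGWith [Nonempty V] (h : G.IsSRGWith n k a c) :
    k * k + c * (1 + k) = k + a * k + c * n := by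
  classical
  obtain ⟨v⟩ := ‹Nonempty V›
  have hA : G.adjMatrix ℕ *ᵥ 1 = k • 1 := by
    ext w
    simp [h.regular.degree_eq]
  have hJ : (of 1 : Matrix V V ℕ) *ᵥ 1 = n • 1 := by
    ext w
    simp [mulVec, dotProduct, h.card]
  have hrow := congrFun (congrArg (· *ᵥ (1 : V → ℕ)) (adjMatrix_sq_of_isSRGWith (R := ℕ) h)) v
  simp only [sq, add_mulVec, smul_mulVec, ← mulVec_mulVec, one_mulVec, mulVec_smul, hA, hJ] at hrow
  simpa [mul_add] using hrow

variable [DecidableEq V]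

theorem lapMatrix_sq_of_isSRGWith [CommRing R] (h : G.IsSRGWith n k a c) :
    G.lapMatrix R ^ 2 = (2 * k - a + c : R) • G.lapMatrix R
      - (c * n : R) • (1 : Matrix V V R) + (c : R) • of 1 := by
  cases isEmpty_or_nonempty V
  · exact Subsingleton.elim _ _
  have hparam : (k * k + c * (1 + k) : R) = k + a * k + c * n := by
    exact_mod_cast congrArg (Nat.cast (R := R)) (mul_self_add_eq_of_isSRGWith h)
  have hA := adjMatrix_sq_of_isSRGWith (R := R) h
  simp only [← Nat.cast_smul_eq_nsmul R] at hA
  have hL : G.lapMatrix R ^ 2 = (k * k : R) • (1 : Matrix V V R) - (2 * k : R) • G.adjMatrix R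
      + G.adjMatrix R ^ 2 := by
    rw [lapMatrix_eq_of_isRegularOfDegree h.regular]
    simp only [sq, sub_mul, mul_sub, smul_mul_assoc, mul_smul_comm, one_mul, mul_one]
    module
  rw [hL, lapMatrix_eq_of_isRegularOfDegree h.regular]
  linear_combination (norm := module) hA - hparam • (1 : Matrix V V R)

theorem srg_lapMatrix_pinv_diag_eq_general [Field R] (h : G.IsSRGWith n k a c)
    (hn : (n : R) ≠ 0) (hc : (c : R) ≠ 0) {B : Matrix V V R}
    (hB : IsMoorePenroseInverse_s15 (G.lapMatrix R) B) (i : V) :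
    B i i = (k * (n - 2) - (n - 1) * (a - c)) / (n ^ 2 * c) := by
  have hentry := congrFun₂ (hB.smul_smul_inv_of_sq_eq (G.isSymm_lapMatrix (R := R))
    (lapMatrix_mul_of_one G) (of_one_mul_lapMatrix G) (lapMatrix_sq_of_isSRGWith h)) i i
  have hdiag : G.lapMatrix R i i = k := by
    simp [lapMatrix_eq_of_isRegularOfDegree h.regular]
  simp only [Matrix.sub_apply, Matrix.smul_apply, smul_eq_mul, one_apply_eq, of_apply,
    Pi.one_apply, hdiag] at hentry
  rw [eq_div_iff (mul_ne_zero (pow_ne_zero 2 hn) hc)]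
  apply mul_left_cancel₀ hc
  linear_combination hentry

end StronglyRegular

/-- For a connected, non-complete strongly regular graph with parameters `(n, k, a, c)`,
every diagonal entry of the Moore–Penrose pseudoinverse `B` of the Laplacian is
`(k (n-2) - (n-1)(a-c)) / (n² c)`. -/
theorem srg_lapMatrix_pinv_diag_eq
    {V : Type*} [Fintype V] [DecidableEq V]
    (G : SimpleGraph V) [DecidableRel G.Adj]
    {n k a c : ℕ}
    (hsrg : G.IsSRGWith n k a c)
    (hG : G.Connected)
    (hnc : G ≠ ⊤)
    (B : Matrix V V ℝ)
    (hB1 : G.lapMatrix ℝ * B * G.lapMatrix ℝ = G.lapMatrix ℝ)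
    (hB2 : B * G.lapMatrix ℝ * B = B)
    (hB3 : (G.lapMatrix ℝ * B)ᵀ = G.lapMatrix ℝ * B)
    (hB4 : (B * G.lapMatrix ℝ)ᵀ = B * G.lapMatrix ℝ) :
    ∀ i : V, B i i =
      ((k : ℝ) * ((n : ℝ) - 2) - ((n : ℝ) - 1) * ((a : ℝ) - c)) / ((n : ℝ) ^ 2 * c) := by
  have hn : n ≠ 0 := hsrg.card ▸ (Fintype.card_pos_iff.2 hG.nonempty).ne'
  exact srg_lapMatrix_pinv_diag_eq_general hsrg (Nat.cast_ne_zero.2 hn)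
    (Nat.cast_ne_zero.2 (mu_ne_zero_of_isSRGWith hsrg hG hnc)) ⟨hB1, hB2, hB3, hB4⟩
end

section
/- Let G be a connected strongly regular graph with parameters (n, k, a, c), not complete and not the pentagon C₅ (so c ≥ 1 and k > 2), with Laplacian L. Suppose x : V → ℕ and d : V → ℤ satisfy L x = d, x_k₀ = 0 for some vertex k₀, |d_{k₀}| ≤ k − 1, and ∑_i |d_i| ≤ 2N for a real number N with 2N ≥ k − 1. Then s := ∑_i x_i satisfies s ≤ n·(k − 1)/(k − 2) + 2·(2N − k + 1)/c. -/
open Matrix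

/-!
Let `d = L x`, `D = ∑ |d i|` and `e = -d v`, where `x v = 0`. Applying the identity
`A² = k + a A + c (J - 1 - A)` to `x` and substituting `A x = k x - d` gives
`c ∑ x i = (k - a + c) e - ∑_{u ~ v} d u`. As `d` sums to zero, each of its partial sums is at most
`D / 2` in absolute value, whence `2 c ∑ x i ≤ 2 (k - a - 1 + c) e + D` and `2 e ≤ D`. Together with
`e ≤ k - 1`, `2 ≤ k - a - 1 + c` and `(k - a - 1 + c) (k - 2) ≤ c n`, this gives the bound when
`k > 2`.

If `k = 2`, the graph is the pentagon, which is excluded, or the quadrilateral. For the latter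
the first term of the bound is `0` since `n (k - 1) / 0 = 0`, and integrality of `x` has to be used:
if `e = 1`, the two neighbours `p`, `q` of `v` are twins, so `d p - d q = 2 (x p - x q) = ± 2`,
which forces `D ≥ 3`.
-/

section ZeroSum

variable {ι M : Type*} [Fintype ι] [AddCommGroup M] [LinearOrder M] [IsOrderedAddMonoid M]

lemma two_nsmul_abs_sum_le_sum_abs_of_sum_eq_zero {f : ι → M} (hf : ∑ i, f i = 0) (s : Finset ι) :
    2 • |∑ i ∈ s, f i| ≤ ∑ i, |f i| := by
  classical
  have hcompl : ∑ i ∈ s, f i = -∑ i ∈ sᶜ, f i :=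
    eq_neg_of_add_eq_zero_left ((Finset.sum_add_sum_compl s f).trans hf)
  calc 2 • |∑ i ∈ s, f i| = |∑ i ∈ s, f i| + |∑ i ∈ sᶜ, f i| := by
        rw [two_nsmul, ← abs_neg (∑ i ∈ sᶜ, f i), ← hcompl]
    _ ≤ ∑ i ∈ s, |f i| + ∑ i ∈ sᶜ, |f i| :=
        add_le_add (Finset.abs_sum_le_sum_abs _ _) (Finset.abs_sum_le_sum_abs _ _)
    _ = ∑ i, |f i| := Finset.sum_add_sum_compl s _

end ZeroSum

section RegularHom

variable {V W : Type*} {G : SimpleGraph V} {H : SimpleGraph W} [G.LocallyFinite] [H.LocallyFinite]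
  {k : ℕ}

lemma adj_map_iff_of_isRegularOfDegree (hG : G.IsRegularOfDegree k) (hH : H.IsRegularOfDegree k)
    {f : G →g H} (hf : Function.Injective f) {u v : V} : H.Adj (f u) (f v) ↔ G.Adj u v := by
  have hmap : (G.neighborFinset u).map ⟨f, hf⟩ = H.neighborFinset (f u) := by
    apply Finset.eq_of_subset_of_card_le
    · simp only [Finset.subset_iff, Finset.mem_map, SimpleGraph.mem_neighborFinset]
      rintro _ ⟨w, huw, rfl⟩
      exact f.map_adj huw
    · rw [Finset.card_map, SimpleGraph.card_neighborFinset_eq_degree,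
        SimpleGraph.card_neighborFinset_eq_degree, hG u, hH (f u)]
  refine ⟨fun h => ?_, f.map_adj⟩
  rw [← SimpleGraph.mem_neighborFinset, ← hmap, Finset.mem_map] at h
  obtain ⟨w, huw, hwv⟩ := h
  rwa [SimpleGraph.mem_neighborFinset, hf hwv] at huw

end RegularHom

section Laplacian

variable {V R : Type*} [Fintype V] [DecidableEq V] (G : SimpleGraph V) [DecidableRel G.Adj]

lemma sum_lapMatrix_mulVec [CommRing R] (x : V → R) : ∑ i, (G.lapMatrix R *ᵥ x) i = 0 := by
  have h : (fun _ => (1 : R)) ⬝ᵥ (G.lapMatrix R *ᵥ x) = 0 := by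
    rw [dotProduct_mulVec, ← mulVec_transpose, (SimpleGraph.isSymm_lapMatrix (R := R) (G := G)).eq,
      SimpleGraph.lapMatrix_mulVec_const_eq_zero, zero_dotProduct]
  simpa only [dotProduct, one_mul] using h

lemma lapMatrix_mulVec_sub_of_neighborFinset_eq [NonAssocRing R] (x : V → R) {p q : V}
    (h : G.neighborFinset p = G.neighborFinset q) :
    (G.lapMatrix R *ᵥ x) p - (G.lapMatrix R *ᵥ x) q = G.degree p * (x p - x q) := by
  have hdeg : G.degree q = G.degree p := congrArg Finset.card h.symm
  rw [SimpleGraph.lapMatrix_mulVec_apply, SimpleGraph.lapMatrix_mulVec_apply, h, hdeg,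
    sub_sub_sub_cancel_right, mul_sub]

end Laplacian

lemma exists_adj_adj_not_adj_of_connected {V : Type*} {G : SimpleGraph V} (hG : G.Connected)
    (hnc : G ≠ ⊤) : ∃ u v w, G.Adj u v ∧ G.Adj v w ∧ ¬ G.Adj u w ∧ u ≠ w := by
  obtain ⟨u, v, hne, hadj⟩ := SimpleGraph.ne_top_iff_exists_not_adj.mp hnc
  obtain ⟨p, hp⟩ := (hG u v).exists_walk_length_eq_dist
  exact SimpleGraph.Walk.exists_adj_adj_not_adj_ne hp
    ((hG u v).one_lt_dist_of_ne_of_not_adj hne hadj)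

section StronglyRegular

variable {V : Type*} [Fintype V] {G : SimpleGraph V} [DecidableRel G.Adj] {n k a c : ℕ}

lemma not_adj_of_isSRGWith_zero (hsrg : G.IsSRGWith n k 0 c) {u v w : V}
    (huv : G.Adj u v) (huw : G.Adj u w) : ¬ G.Adj v w := fun hvw =>
  (Fintype.card_eq_zero_iff.mp (hsrg.of_adj u v huv)).elim ⟨w, huw, hvw⟩

lemma eq_of_mem_commonNeighbors_of_isSRGWith_one (hsrg : G.IsSRGWith n k a 1) {u v p q : V}
    (huv : u ≠ v) (hadj : ¬ G.Adj u v) (hp : p ∈ G.commonNeighbors u v)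
    (hq : q ∈ G.commonNeighbors u v) : p = q :=
  congrArg Subtype.val
    (Fintype.card_le_one_iff.mp (hsrg.of_not_adj huv hadj).le ⟨p, hp⟩ ⟨q, hq⟩)

lemma commonNeighbors_nonempty_of_isSRGWith (hsrg : G.IsSRGWith n k a c) (hc : 0 < c) {u v : V}
    (huv : u ≠ v) (hadj : ¬ G.Adj u v) : (G.commonNeighbors u v).Nonempty :=
  Set.nonempty_coe_sort.mp (Fintype.card_pos_iff.mp (hc.trans_eq (hsrg.of_not_adj huv hadj).symm))

lemma pentagon_or_eq_two_of_isSRGWith_two_zero [Nonempty V] (hsrg : G.IsSRGWith n 2 0 c) :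
    n = 5 ∧ c = 1 ∨ c = 2 := by
  have hparam := hsrg.param_eq G (hsrg.card ▸ Fintype.card_pos)
  have hdvd : c ∣ 2 := Dvd.intro_left (n - 2 - 1) (by omega)
  rcases (Nat.dvd_prime Nat.prime_two).mp hdvd with rfl | rfl
  · exact Or.inl ⟨by omega, rfl⟩
  · exact Or.inr rfl

/-- As there are no triangles, a path `v₀ v₁ v₂` has `v₀ ≁ v₂`; a second neighbour `v₄` of `v₀` is
not adjacent to `v₂`, since `v₁` is the only common neighbour of `v₀` and `v₂`. Then `v₂` and `v₄`
have a common neighbour, which closes the cycle. -/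
lemma exists_injective_hom_cycleGraph_five (hsrg : G.IsSRGWith n k 0 1) (hk : 2 ≤ k)
    (v₀ : V) : ∃ f : SimpleGraph.cycleGraph 5 →g G, Function.Injective f := by
  have exists_adj_ne (v w : V) : ∃ u, G.Adj v u ∧ u ≠ w := by
    simpa using Finset.exists_mem_ne (hk.trans_eq (hsrg.regular v).symm) w
  obtain ⟨v₁, h01, -⟩ := exists_adj_ne v₀ v₀
  obtain ⟨v₂, h12, h20⟩ := exists_adj_ne v₁ v₀
  obtain ⟨v₄, h04, h41⟩ := exists_adj_ne v₀ v₁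
  have h02 : ¬ G.Adj v₀ v₂ := not_adj_of_isSRGWith_zero hsrg h01.symm h12
  have h14 : ¬ G.Adj v₁ v₄ := not_adj_of_isSRGWith_zero hsrg h01 h04
  have h24 : ¬ G.Adj v₂ v₄ := fun h => h41
    (eq_of_mem_commonNeighbors_of_isSRGWith_one hsrg h20.symm h02 ⟨h04, h⟩ ⟨h01, h12.symm⟩)
  have hne24 : v₂ ≠ v₄ := by rintro rfl; exact h02 h04
  obtain ⟨v₃, h23, h43⟩ := commonNeighbors_nonempty_of_isSRGWith hsrg one_pos hne24 h24
  have hne03 : v₀ ≠ v₃ := by rintro rfl; exact h02 h23.symm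
  have hne13 : v₁ ≠ v₃ := by rintro rfl; exact h14 h43.symm
  let f : Fin 5 → V := ![v₀, v₁, v₂, v₃, v₄]
  have hsucc (i : Fin 5) : G.Adj (f i) (f (i + 1)) := by
    fin_cases i
    exacts [h01, h12, h23, h43.symm, h04.symm]
  refine ⟨⟨f, fun {i j} hij => ?_⟩, ?_⟩
  · rcases SimpleGraph.cycleGraph_adj.mp hij with h | h <;> obtain rfl := sub_eq_iff_eq_add'.mp h
    exacts [(hsucc j).symm, hsucc i]
  · change Function.Injective f
    rw [← List.nodup_ofFn]
    simp [f, h01.ne, h20.symm, hne03, h04.ne, h12.ne, hne13, h41.symm, h23.ne, hne24, h43.ne']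

lemma nonempty_iso_cycleGraph_five (hsrg : G.IsSRGWith 5 2 0 1) :
    Nonempty (G ≃g SimpleGraph.cycleGraph 5) := by
  obtain ⟨v⟩ : Nonempty V := Fintype.card_pos_iff.mp (hsrg.card ▸ by norm_num)
  obtain ⟨f, hf⟩ := exists_injective_hom_cycleGraph_five hsrg le_rfl v
  have hbij : Function.Bijective f :=
    (Fintype.bijective_iff_injective_and_card f).mpr ⟨hf, by simp [hsrg.card]⟩
  have hcycle : (SimpleGraph.cycleGraph 5).IsRegularOfDegree 2 := fun _ =>
    SimpleGraph.cycleGraph_degree_three_le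
  exact ⟨(RelIso.mk (Equiv.ofBijective f hbij)
    (adj_map_iff_of_isRegularOfDegree hcycle hsrg.regular hf)).symm⟩

lemma neighborFinset_eq_of_isSRGWith_self (hsrg : G.IsSRGWith n k a k) {p q : V} (hpq : p ≠ q)
    (hadj : ¬ G.Adj p q) : G.neighborFinset p = G.neighborFinset q := by
  classical
  have hinter : (G.neighborFinset p ∩ G.neighborFinset q).card = k := by
    rw [← hsrg.of_not_adj hpq hadj, ← Set.toFinset_card]
    congr 1
    ext
    simp [SimpleGraph.mem_commonNeighbors]
  have hcard (v : V) : (G.neighborFinset v).card ≤ (G.neighborFinset p ∩ G.neighborFinset q).card :=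
    (hsrg.regular v).le.trans_eq hinter.symm
  exact (Finset.eq_of_subset_of_card_le Finset.inter_subset_left (hcard p)).symm.trans
    (Finset.eq_of_subset_of_card_le Finset.inter_subset_right (hcard q))

lemma pos_and_add_two_le_of_isSRGWith (hsrg : G.IsSRGWith n k a c) (hG : G.Connected)
    (hnc : G ≠ ⊤) : 0 < c ∧ a + 2 ≤ k := by
  classical
  obtain ⟨u, v, w, huv, hvw, hadj, huw⟩ := exists_adj_adj_not_adj_of_connected hG hnc
  constructor
  · rw [← hsrg.of_not_adj huw hadj]
    exact Fintype.card_pos_iff.mpr ⟨v, huv, hvw.symm⟩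
  · have hu : u ∉ (G.commonNeighbors u v).toFinset := by simp [SimpleGraph.mem_commonNeighbors]
    have hw : w ∉ insert u (G.commonNeighbors u v).toFinset := by
      simp [SimpleGraph.mem_commonNeighbors, hadj, huw.symm]
    have hsub : insert w (insert u (G.commonNeighbors u v).toFinset) ⊆ G.neighborFinset v := by
      intro z
      simp only [Finset.mem_insert, Set.mem_toFinset, SimpleGraph.mem_commonNeighbors,
        SimpleGraph.mem_neighborFinset]
      rintro (rfl | rfl | ⟨-, hvz⟩)
      exacts [hvw, huv.symm, hvz]
    calc a + 2 = (insert w (insert u (G.commonNeighbors u v).toFinset)).card := by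
          rw [Finset.card_insert_of_notMem hw, Finset.card_insert_of_notMem hu, Set.toFinset_card,
            hsrg.of_adj u v huv]
      _ ≤ (G.neighborFinset v).card := Finset.card_le_card hsub
      _ = k := hsrg.regular v

lemma sum_neighborFinset_sum_neighborFinset {R : Type*} [CommRing R] (hsrg : G.IsSRGWith n k a c)
    (x : V → R) (v : V) :
    ∑ u ∈ G.neighborFinset v, ∑ w ∈ G.neighborFinset u, x w =
      k * x v + a * ∑ u ∈ G.neighborFinset v, x u +
        c * (∑ i, x i - x v - ∑ u ∈ G.neighborFinset v, x u) := by
  classical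
  have hcompl : (Gᶜ.adjMatrix R *ᵥ x) v = ∑ i, x i - x v - ∑ u ∈ G.neighborFinset v, x u := by
    rw [SimpleGraph.adjMatrix_mulVec_apply, SimpleGraph.neighborFinset_compl,
      Finset.sum_sdiff_eq_sub (by simp), Finset.sum_singleton,
      ← Finset.sum_add_sum_compl (G.neighborFinset v)]
    ring
  have h := congrFun (congrArg (· *ᵥ x) (hsrg.matrix_eq (α := R))) v
  simp only [pow_two, ← mulVec_mulVec, add_mulVec, Pi.add_apply, smul_mulVec, one_mulVec,
    Pi.smul_apply, hcompl, SimpleGraph.adjMatrix_mulVec_apply G] at h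
  simpa only [nsmul_eq_mul] using h

lemma mul_card_eq_of_isSRGWith {R : Type*} [CommRing R] [Nonempty V]
    (hsrg : G.IsSRGWith n k a c) :
    (c * n : R) = k * (k - a - 1) + c * (k + 1) := by
  obtain ⟨v⟩ := ‹Nonempty V›
  have h := sum_neighborFinset_sum_neighborFinset hsrg (fun _ => (1 : R)) v
  simp only [Finset.sum_const, SimpleGraph.card_neighborFinset_eq_degree,
    hsrg.regular.degree_eq, nsmul_eq_mul, Finset.card_univ, hsrg.card, mul_one] at h
  linear_combination -h

lemma mul_sub_one_le_mul_div_of_isSRGWith {F : Type*} [Field F] [LinearOrder F]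
    [IsStrictOrderedRing F] [Nonempty V] (hsrg : G.IsSRGWith n k a c) (hak : a + 1 ≤ k)
    (hk : 2 < k) :
    (k - a - 1 + c : F) * (k - 1) ≤ c * (n * (k - 1) / (k - 2)) := by
  have hakF : (a + 1 : F) ≤ k := by exact_mod_cast hak
  have hkF : (2 : F) < k := by exact_mod_cast hk
  have hcard : (k - a - 1 + c : F) * (k - 2) ≤ c * n := by
    rw [mul_card_eq_of_isSRGWith hsrg]
    linarith [Nat.cast_nonneg (α := F) c]
  rw [← mul_div_assoc, le_div_iff₀ (sub_pos.mpr hkF), ← mul_assoc, mul_right_comm]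
  exact mul_le_mul_of_nonneg_right hcard (by linarith)

variable [DecidableEq V]

lemma mul_sum_sub_eq_of_isSRGWith {R : Type*} [CommRing R] (hsrg : G.IsSRGWith n k a c)
    (x : V → R) (v : V) :
    c * ∑ i, (x i - x v) = -((k - a + c) * (G.lapMatrix R *ᵥ x) v) -
      ∑ u ∈ G.neighborFinset v, (G.lapMatrix R *ᵥ x) u := by
  have hlap (u : V) : (G.lapMatrix R *ᵥ x) u =
      k * (x u - x v) - ∑ w ∈ G.neighborFinset u, (x w - x v) := by
    rw [SimpleGraph.lapMatrix_mulVec_apply, Finset.sum_sub_distrib, Finset.sum_const,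
      SimpleGraph.card_neighborFinset_eq_degree, hsrg.regular.degree_eq, nsmul_eq_mul]
    ring
  simp only [hlap, Finset.sum_sub_distrib (f := fun u => (k : R) * (x u - x v)), ← Finset.mul_sum,
    sum_neighborFinset_sum_neighborFinset hsrg (fun i => x i - x v) v]
  ring

lemma two_mul_mul_sum_sub_le_of_isSRGWith {R : Type*} [CommRing R] [LinearOrder R]
    [IsStrictOrderedRing R] (hsrg : G.IsSRGWith n k a c) (x : V → R) (v : V) :
    2 * (c * ∑ i, (x i - x v)) ≤
      2 * (k - a - 1 + c) * -(G.lapMatrix R *ᵥ x) v + ∑ i, |(G.lapMatrix R *ᵥ x) i| := by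
  have hpartial := two_nsmul_abs_sum_le_sum_abs_of_sum_eq_zero (sum_lapMatrix_mulVec G x)
    (insert v (G.neighborFinset v))
  rw [Finset.sum_insert (G.notMem_neighborFinset_self v), two_nsmul] at hpartial
  have hneg := neg_le_abs
    ((G.lapMatrix R *ᵥ x) v + ∑ u ∈ G.neighborFinset v, (G.lapMatrix R *ᵥ x) u)
  rw [mul_sum_sub_eq_of_isSRGWith hsrg]
  linarith

theorem sum_sub_le_of_isSRGWith_of_two_lt {F : Type*} [Field F] [LinearOrder F]
    [IsStrictOrderedRing F] (hsrg : G.IsSRGWith n k a c) (hc : 0 < c) (hak : a + 2 ≤ k)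
    (hk : 2 < k) (x : V → F) (v : V)
    (hv : -(G.lapMatrix F *ᵥ x) v ≤ k - 1) :
    ∑ i, (x i - x v) ≤
      n * (k - 1) / (k - 2) + 2 * (∑ i, |(G.lapMatrix F *ᵥ x) i| - k + 1) / c := by
  have : Nonempty V := ⟨v⟩
  have hcF : (1 : F) ≤ c := by exact_mod_cast hc
  have hakF : (a + 2 : F) ≤ k := by exact_mod_cast hak
  have hc0 : (0 : F) < c := zero_lt_one.trans_le hcF
  have hcore := two_mul_mul_sum_sub_le_of_isSRGWith hsrg x v
  have hpartial := two_nsmul_abs_sum_le_sum_abs_of_sum_eq_zero (sum_lapMatrix_mulVec G x) {v}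
  rw [Finset.sum_singleton, two_nsmul] at hpartial
  have hneg := neg_le_abs ((G.lapMatrix F *ᵥ x) v)
  set D := ∑ i, |(G.lapMatrix F *ᵥ x) i|
  set e := -(G.lapMatrix F *ᵥ x) v
  have hD : 0 ≤ D := Finset.sum_nonneg fun _ _ => abs_nonneg _
  have heD : 2 * e ≤ D := by linarith
  have hslack : 0 ≤ (k - a - 1 + c - 2 : F) * (k - 1 - e) :=
    mul_nonneg (by linarith) (by linarith)
  refine le_of_mul_le_mul_left ?_ hc0
  calc c * ∑ i, (x i - x v) ≤ (k - a - 1 + c) * e + D / 2 := by linarith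
    _ ≤ (k - a - 1 + c) * (k - 1) - 2 * (k - 1 - e) + D / 2 := by linarith
    _ ≤ (k - a - 1 + c) * (k - 1) + 2 * (D - k + 1) := by linarith [heD]
    _ ≤ c * (n * (k - 1) / (k - 2)) + 2 * (D - k + 1) := by
        linarith [mul_sub_one_le_mul_div_of_isSRGWith (F := F) hsrg (by omega) hk]
    _ = c * (n * (k - 1) / (k - 2) + 2 * (D - k + 1) / c) := by
        rw [mul_add (c : F), mul_div_cancel₀ _ hc0.ne']

lemma sum_add_one_le_max_of_isSRGWith_two_zero_two (hsrg : G.IsSRGWith n 2 0 2) {x : V → ℤ}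
    (hx : ∀ i, 0 ≤ x i) {v : V} (hxv : x v = 0) (hv : -(G.lapMatrix ℤ *ᵥ x) v ≤ 1) :
    ∑ i, x i + 1 ≤ max (∑ i, |(G.lapMatrix ℤ *ᵥ x) i|) 1 := by
  have hcore := two_mul_mul_sum_sub_le_of_isSRGWith hsrg x v
  simp only [hxv, sub_zero] at hcore
  obtain ⟨p, q, hpq, hN⟩ := Finset.card_eq_two.mp (hsrg.regular v)
  have hvp : G.Adj v p := by simp [← SimpleGraph.mem_neighborFinset, hN]
  have hvq : G.Adj v q := by simp [← SimpleGraph.mem_neighborFinset, hN]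
  have hlap : (G.lapMatrix ℤ *ᵥ x) v = -(x p + x q) := by
    rw [SimpleGraph.lapMatrix_mulVec_apply, hN, Finset.sum_pair hpq, hxv, mul_zero, zero_sub]
  have htwins : (G.lapMatrix ℤ *ᵥ x) p - (G.lapMatrix ℤ *ᵥ x) q = 2 * (x p - x q) := by
    rw [lapMatrix_mulVec_sub_of_neighborFinset_eq G x (neighborFinset_eq_of_isSRGWith_self hsrg hpq
      (not_adj_of_isSRGWith_zero hsrg hvp hvq)), hsrg.regular p, Nat.cast_ofNat]
  have hxp := hx p
  have hxq := hx q
  rw [hlap, neg_neg] at hcore hv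
  have hdiff : |x p - x q| = x p + x q := by
    rcases (by omega : x p = 0 ∨ x q = 0) with h | h <;> simp [h, hxp, hxq]
  have hD : 3 * (x p + x q) ≤ ∑ i, |(G.lapMatrix ℤ *ᵥ x) i| :=
    calc 3 * (x p + x q) = |(G.lapMatrix ℤ *ᵥ x) v| +
          |(G.lapMatrix ℤ *ᵥ x) p - (G.lapMatrix ℤ *ᵥ x) q| := by
          rw [htwins, abs_mul, hdiff, abs_two, hlap, abs_neg, abs_of_nonneg (add_nonneg hxp hxq)]
          ring
      _ ≤ |(G.lapMatrix ℤ *ᵥ x) v| + (|(G.lapMatrix ℤ *ᵥ x) p| + |(G.lapMatrix ℤ *ᵥ x) q|) := by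
          gcongr
          exact abs_sub _ _
      _ = ∑ i ∈ insert v (G.neighborFinset v), |(G.lapMatrix ℤ *ᵥ x) i| := by
          rw [Finset.sum_insert (G.notMem_neighborFinset_self v), hN, Finset.sum_pair hpq]
      _ ≤ ∑ i, |(G.lapMatrix ℤ *ᵥ x) i| :=
          Finset.sum_le_univ_sum_of_nonneg fun _ => abs_nonneg _
  omega

end StronglyRegular

/-- For a connected strongly regular graph `G` with parameters `(n, k, a, c)`, neither
complete nor the pentagon `C₅`, the duration `s = ∑ i, x i` of a terminating
chip-firing game with `N` chips satisfies `s ≤ n (k-1)/(k-2) + 2(2N - k + 1)/c`. -/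
theorem chipFiring_duration_srg_bound
    {V : Type*} [Fintype V] [DecidableEq V]
    (G : SimpleGraph V) [DecidableRel G.Adj]
    {n k a c : ℕ}
    (hsrg : G.IsSRGWith n k a c)
    (hG : G.Connected)
    (hnc : G ≠ ⊤)
    (hC5 : ¬ Nonempty (G ≃g SimpleGraph.cycleGraph 5))
    (x : V → ℕ) (d : V → ℤ)
    (hLx : G.lapMatrix ℤ *ᵥ (fun i => (x i : ℤ)) = d)
    (k₀ : V) (hk₀ : x k₀ = 0)
    (hdk₀ : |d k₀| ≤ (k : ℤ) - 1)
    (N : ℝ) (hN : (∑ i, |(d i : ℝ)|) ≤ 2 * N)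
    (hNk : (k : ℝ) - 1 ≤ 2 * N) :
    ((∑ i, x i : ℕ) : ℝ) ≤
      n * ((k : ℝ) - 1) / ((k : ℝ) - 2) + 2 * (2 * N - (k : ℝ) + 1) / c := by
  obtain ⟨hc, hak⟩ := pos_and_add_two_le_of_isSRGWith hsrg hG hnc
  have hv : -(d k₀) ≤ (k : ℤ) - 1 := (neg_le_abs _).trans hdk₀
  rcases (by omega : k = 2 ∧ a = 0 ∨ 2 < k) with ⟨rfl, rfl⟩ | hk
  · have : Nonempty V := ⟨k₀⟩
    obtain ⟨rfl, rfl⟩ | rfl := pentagon_or_eq_two_of_isSRGWith_two_zero hsrg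
    · exact absurd (nonempty_iso_cycleGraph_five hsrg) hC5
    · have hbound := sum_add_one_le_max_of_isSRGWith_two_zero_two hsrg
        (fun i => Int.natCast_nonneg (x i)) (by simp [hk₀]) (hLx ▸ hv)
      rw [hLx] at hbound
      have hboundR : ∑ i, (x i : ℝ) + 1 ≤ max (∑ i, |(d i : ℝ)|) 1 := by exact_mod_cast hbound
      have hmax := hboundR.trans (max_le hN (by norm_num at hNk; linarith))
      push_cast
      norm_num
      linarith
  · have hlap (i : V) : (G.lapMatrix ℝ *ᵥ fun j => (x j : ℝ)) i = d i := by
      simp [← hLx, SimpleGraph.lapMatrix_mulVec_apply]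
    have hbound := sum_sub_le_of_isSRGWith_of_two_lt hsrg hc hak hk (fun i => (x i : ℝ)) k₀
      (by rw [hlap]; exact_mod_cast hv)
    simp only [hlap, hk₀, Nat.cast_zero, sub_zero] at hbound
    push_cast
    exact hbound.trans (by gcongr)
end
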